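/- Let (V₁, V₂) be a modified-bishift-semigroup on a complex Hilbert space H. Then there exist a Hilbert space F and a unitary Z : H → L²(ℝ² ∖ ℝ₊², F) such that Z V_{1,t} Z* = M_{1,t}^F and Z V_{2,t} Z* = M_{2,t}^F for all t ≥ 0. -/

import Mathlib

open MeasureTheory ContinuousLinearMap
open scoped ENNReal NNReal InnerProductSpace ComplexInnerProductSpace

noncomputable section

section SemigroupDefs

variable {G : Type} [NormedAddCommGroup G] [InnerProductSpace ℂ G] [CompleteSpace G]

/-- A (C₀-) strongly continuous one-parameter semigroup of bounded operators. -/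
def IsC0Semigroup (V : ℝ≥0 → G →L[ℂ] G) : Prop :=
  V 0 = 1 ∧ (∀ s t : ℝ≥0, V (s + t) = V s ∘L V t) ∧ ∀ x : G, Continuous fun t : ℝ≥0 => V t x

/-- A C₀-semigroup of isometries. -/
def IsIsometrySemigroup (V : ℝ≥0 → G →L[ℂ] G) : Prop :=
  IsC0Semigroup V ∧ ∀ (t : ℝ≥0) (x : G), ‖V t x‖ = ‖x‖

/-- The closed subspace `L` reduces the semigroup `V`: it is invariant under every `V t`
and every `(V t)*`. -/
def ReducedBy (V : ℝ≥0 → G →L[ℂ] G) (L : Submodule ℂ G) : Prop :=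
  (∀ t : ℝ≥0, ∀ x ∈ L, V t x ∈ L) ∧ ∀ t : ℝ≥0, ∀ x ∈ L, adjoint (V t) x ∈ L

/-- `T` restricts to a unitary operator on the subspace `L`. -/
def RestrictsToUnitaryOn (T : G →L[ℂ] G) (L : Submodule ℂ G) : Prop :=
  (∀ x ∈ L, T x ∈ L) ∧ (∀ x ∈ L, ‖T x‖ = ‖x‖) ∧ ∀ y ∈ L, ∃ x ∈ L, T x = y

/-- Every `V t` restricts to a unitary operator on the subspace `L`. -/
def IsUnitarySemigroupOn (V : ℝ≥0 → G →L[ℂ] G) (L : Submodule ℂ G) : Prop :=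
  ∀ t : ℝ≥0, RestrictsToUnitaryOn (V t) L

/-- A unitary C₀-semigroup: every `V t` is a surjective isometry. -/
def IsUnitarySemigroup (V : ℝ≥0 → G →L[ℂ] G) : Prop :=
  IsC0Semigroup V ∧ ∀ t : ℝ≥0, (∀ x : G, ‖V t x‖ = ‖x‖) ∧ Function.Surjective (V t)

/-- `V` is completely nonunitary on the subspace `K`: there is no nonzero closed subspace
of `K` reducing `V` on which every `V t` restricts to a unitary. -/
def IsCnuOn (V : ℝ≥0 → G →L[ℂ] G) (K : Submodule ℂ G) : Prop :=
  ∀ L : Submodule ℂ G, IsClosed (L : Set G) → L ≤ K → ReducedBy V L →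
    IsUnitarySemigroupOn V L → L = ⊥

/-- A completely nonunitary semigroup. -/
def IsCnu (V : ℝ≥0 → G →L[ℂ] G) : Prop := IsCnuOn V ⊤

/-- Two semigroups commute. -/
def SgCommute (V1 V2 : ℝ≥0 → G →L[ℂ] G) : Prop :=
  ∀ t s : ℝ≥0, V1 t ∘L V2 s = V2 s ∘L V1 t

/-- Two semigroups doubly commute. -/
def SgDoublyCommute (V1 V2 : ℝ≥0 → G →L[ℂ] G) : Prop :=
  SgCommute V1 V2 ∧ ∀ t s : ℝ≥0, V1 t ∘L adjoint (V2 s) = adjoint (V2 s) ∘L V1 t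

/-- A completely nonunitary pair of semigroups: no nonzero closed subspace reduces both
semigroups in such a way that both restrict to unitary semigroups. -/
def IsCnuPair (V1 V2 : ℝ≥0 → G →L[ℂ] G) : Prop :=
  ∀ L : Submodule ℂ G, IsClosed (L : Set G) → ReducedBy V1 L → ReducedBy V2 L →
    IsUnitarySemigroupOn V1 L → IsUnitarySemigroupOn V2 L → L = ⊥

/-- A strongly continuous one-parameter unitary group. -/
def IsUnitaryGroup (U : ℝ → G →L[ℂ] G) : Prop :=
  U 0 = 1 ∧ (∀ s t : ℝ, U (s + t) = U s ∘L U t) ∧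
  (∀ (t : ℝ) (x : G), ‖U t x‖ = ‖x‖) ∧ (∀ t : ℝ, Function.Surjective (U t)) ∧
  ∀ x : G, Continuous fun t : ℝ => U t x

/-- Two subspaces are mutually orthogonal. -/
def OrthoSubspaces (A B : Submodule ℂ G) : Prop :=
  ∀ x ∈ A, ∀ y ∈ B, ⟪x, y⟫_ℂ = 0

end SemigroupDefs

/-- The closed first quadrant `ℝ₊² ⊆ ℝ²`. -/
def QQ : Set (ℝ × ℝ) := {p | 0 ≤ p.1 ∧ 0 ≤ p.2}

/-- Lebesgue measure on `ℝ²` restricted to the quadrant `ℝ₊²`; `Lp F 2 nuQ` plays the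
role of `L²(ℝ₊², F)`. -/
def nuQ : Measure (ℝ × ℝ) := (volume : Measure (ℝ × ℝ)).restrict QQ

/-- Lebesgue measure on `ℝ²` restricted to `ℝ² ∖ ℝ₊²`; `Lp F 2 nuQc` plays the role of
`L²(ℝ² ∖ ℝ₊², F)`. -/
def nuQc : Measure (ℝ × ℝ) := (volume : Measure (ℝ × ℝ)).restrict QQᶜ

/-- `(V1, V2)` is a bishift-semigroup: it is jointly unitarily equivalent to the pair
`(𝒮₁^F, 𝒮₂^F)` of shift semigroups on `L²(ℝ₊², F)` for some Hilbert space `F`. -/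
def IsBishiftPair {G : Type} [NormedAddCommGroup G] [InnerProductSpace ℂ G] [CompleteSpace G]
    (V1 V2 : ℝ≥0 → G →L[ℂ] G) : Prop :=
  ∃ (F : Type) (_ : NormedAddCommGroup F) (_ : InnerProductSpace ℂ F) (_ : CompleteSpace F)
    (Z : G ≃ₗᵢ[ℂ] Lp F 2 nuQ),
    ∀ (t : ℝ≥0) (x : G),
      ((Z (V1 t x) : ℝ × ℝ → F) =ᵐ[nuQ]
        fun p => if (t : ℝ) ≤ p.1 then (Z x : ℝ × ℝ → F) (p.1 - (t : ℝ), p.2) else 0) ∧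
      ((Z (V2 t x) : ℝ × ℝ → F) =ᵐ[nuQ]
        fun p => if (t : ℝ) ≤ p.2 then (Z x : ℝ × ℝ → F) (p.1, p.2 - (t : ℝ)) else 0)

/-- `(U1, U2)` on the ambient space `G` is a minimal unitary extension of the commuting
pair of semigroups `(V1, V2)` living on the closed subspace `K` of `G`. -/
def IsMinimalUnitaryExtension {G : Type} [NormedAddCommGroup G] [InnerProductSpace ℂ G]
    [CompleteSpace G] (K : Submodule ℂ G) (V1 V2 : ℝ≥0 → ↥K →L[ℂ] ↥K)
    (U1 U2 : ℝ → G →L[ℂ] G) : Prop :=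
  IsUnitaryGroup U1 ∧ IsUnitaryGroup U2 ∧
  (∀ s t : ℝ, U1 s ∘L U2 t = U2 t ∘L U1 s) ∧
  (∀ (t : ℝ≥0) (h : ↥K),
    U1 (t : ℝ) (h : G) = (V1 t h : G) ∧ U2 (t : ℝ) (h : G) = (V2 t h : G)) ∧
  (Submodule.span ℂ
    {x : G | ∃ (t s : ℝ) (h : ↥K), x = U1 t (U2 s (h : G))}).topologicalClosure = ⊤

/-- The dual pair of `(V1, V2)` (with respect to the minimal unitary extension `(U1, U2)`
of `(V1, V2)` living on `Kᗮ`, given by `Ṽⱼ,t = (Ūⱼ,t)* |_{Kᗮ}`) is doubly commuting: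
`Ṽ₁,t Ṽ₂,s = Ṽ₂,s Ṽ₁,t` and `Ṽ₁,t (Ṽ₂,s)* = (Ṽ₂,s)* Ṽ₁,t`.  Here `(Ṽ₂,s)* x`, for
`x ∈ Kᗮ`, is characterised as the unique `w ∈ Kᗮ` with `U2 s x - w ∈ K`. -/
def DualDoublyCommutes {G : Type} [NormedAddCommGroup G] [InnerProductSpace ℂ G]
    [CompleteSpace G] (K : Submodule ℂ G) (U1 U2 : ℝ → G →L[ℂ] G) : Prop :=
  ∀ t s : ℝ, 0 ≤ t → 0 ≤ s → ∀ x ∈ Kᗮ,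
    (adjoint (U1 t) (adjoint (U2 s) x) = adjoint (U2 s) (adjoint (U1 t) x)) ∧
    ∀ w w' : G, w ∈ Kᗮ → U2 s x - w ∈ K → w' ∈ Kᗮ →
      U2 s (adjoint (U1 t) x) - w' ∈ K → adjoint (U1 t) w = w'

/-- The restriction of the semigroup `V` to an invariant subspace `L`. -/
def SGRestrict {G : Type} [NormedAddCommGroup G] [InnerProductSpace ℂ G]
    (V : ℝ≥0 → G →L[ℂ] G) (L : Submodule ℂ G)
    (hL : ∀ t : ℝ≥0, ∀ x ∈ L, V t x ∈ L) : ℝ≥0 → ↥L →L[ℂ] ↥L := fun t =>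
  { toLinearMap := (V t).toLinearMap.restrict (fun x hx => hL t x hx)
    cont := Continuous.subtype_mk ((V t).continuous.comp continuous_subtype_val) _ }

/-- The dual of the pair extended by the unitary groups `(U1, U2)`, i.e. the pair
`(Ṽ₁, Ṽ₂)` on `Kᗮ` given by `Ṽⱼ,t = (Ūⱼ,t)*|_{Kᗮ}`, is a bishift-semigroup: there is a
unitary `Z : Kᗮ → L²(ℝ₊², F)` carrying `(Ṽ₁, Ṽ₂)` to the pair of shift semigroups. -/
def DualIsBishift {G : Type} [NormedAddCommGroup G] [InnerProductSpace ℂ G]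
    [CompleteSpace G] (K : Submodule ℂ G) (U1 U2 : ℝ → G →L[ℂ] G) : Prop :=
  ∃ (F : Type) (_ : NormedAddCommGroup F) (_ : InnerProductSpace ℂ F) (_ : CompleteSpace F)
    (Z : ↥Kᗮ ≃ₗᵢ[ℂ] Lp F 2 nuQ),
    ∀ t : ℝ, 0 ≤ t → ∀ f g : Lp F 2 nuQ,
      (((g : ℝ × ℝ → F) =ᵐ[nuQ]
          fun p => if t ≤ p.1 then (f : ℝ × ℝ → F) (p.1 - t, p.2) else 0) →
        adjoint (U1 t) (Z.symm f : G) = (Z.symm g : G)) ∧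
      (((g : ℝ × ℝ → F) =ᵐ[nuQ]
          fun p => if t ≤ p.2 then (f : ℝ × ℝ → F) (p.1, p.2 - t) else 0) →
        adjoint (U2 t) (Z.symm f : G) = (Z.symm g : G))

/-- `(V1, V2)` is a modified-bishift-semigroup: a completely nonunitary commuting pair of
C₀-semigroups of isometries whose dual (with respect to a minimal unitary extension) is a
bishift-semigroup. -/
def IsModifiedBishift {G : Type} [NormedAddCommGroup G] [InnerProductSpace ℂ G]
    [CompleteSpace G] (V1 V2 : ℝ≥0 → G →L[ℂ] G) : Prop :=
  IsIsometrySemigroup V1 ∧ IsIsometrySemigroup V2 ∧ SgCommute V1 V2 ∧ IsCnuPair V1 V2 ∧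
  ∃ (Ebar : Type) (_ : NormedAddCommGroup Ebar) (_ : InnerProductSpace ℂ Ebar)
    (_ : CompleteSpace Ebar) (J : G →ₗᵢ[ℂ] Ebar) (U1 U2 : ℝ → Ebar →L[ℂ] Ebar),
    IsUnitaryGroup U1 ∧ IsUnitaryGroup U2 ∧
    (∀ s t : ℝ, U1 s ∘L U2 t = U2 t ∘L U1 s) ∧
    (∀ (t : ℝ≥0) (x : G), U1 (t : ℝ) (J x) = J (V1 t x) ∧ U2 (t : ℝ) (J x) = J (V2 t x)) ∧
    (Submodule.span ℂ
      {y : Ebar | ∃ (t s : ℝ) (x : G), y = U1 t (U2 s (J x))}).topologicalClosure = ⊤ ∧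
    DualIsBishift (LinearMap.range J.toLinearMap) U1 U2

/-!
The two unitary groups of the minimal extension combine into a representation `U(s, t) = Ū₁(s)*
Ū₂(t)*` of `ℝ²`. It dilates the dual pair, which is a model of the quadrant shift on `L²(ℝ₊², F)`;
so does the translation representation on `L²(ℝ², F)`. In both cases the translates of the dilated
space span a dense subspace: for translations because the translates of `ℝ₊²` exhaust `ℝ²`, for
`U` because the orthogonal complement of the span would be a reducing subspace of `H` on which the
pair is unitary. Since `ℝ²` is directed, dilations of a given semigroup with this density property
are unitarily equivalent, and the equivalence maps `H`, the complement of the dual space, onto the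
complement `L²(ℝ² ∖ ℝ₊², F)` of `L²(ℝ₊², F)`.
-/

open Filter Set
open Multiplicative (ofAdd)

section IsometricRep

/-- A representation of an additive group `Γ` by linear isometries of `E`. The values are not
required to be surjective: `U (ofAdd (-v))` is automatically a two-sided inverse of
`U (ofAdd v)`, so on a Hilbert space this is a unitary representation. -/
abbrev IsometricRep (𝕜 Γ E : Type*) [Semiring 𝕜] [AddGroup Γ] [SeminormedAddCommGroup E]
    [Module 𝕜 E] :=
  Multiplicative Γ →* (E →ₗᵢ[𝕜] E)

namespace IsometricRep

variable {𝕜 Γ E : Type*} [AddGroup Γ]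

section Module

variable [Semiring 𝕜] [SeminormedAddCommGroup E] [Module 𝕜 E] (U : IsometricRep 𝕜 Γ E)

lemma zero_apply (x : E) : U (ofAdd 0) x = x := by
  rw [ofAdd_zero, map_one, LinearIsometry.coe_one, id]

lemma add_apply (v w : Γ) (x : E) : U (ofAdd (v + w)) x = U (ofAdd v) (U (ofAdd w) x) := by
  rw [ofAdd_add, map_mul, LinearIsometry.coe_mul, Function.comp_apply]

lemma neg_apply_apply (v : Γ) (x : E) : U (ofAdd (-v)) (U (ofAdd v) x) = x := by
  rw [← add_apply, neg_add_cancel, zero_apply]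

lemma apply_neg_apply (v : Γ) (x : E) : U (ofAdd v) (U (ofAdd (-v)) x) = x := by
  rw [← add_apply, add_neg_cancel, zero_apply]

end Module

lemma inner_apply_left [RCLike 𝕜] [SeminormedAddCommGroup E] [InnerProductSpace 𝕜 E]
    (U : IsometricRep 𝕜 Γ E) (v : Γ) (x y : E) :
    inner 𝕜 (U (ofAdd v) x) y = inner 𝕜 x (U (ofAdd (-v)) y) := by
  rw [← (U (ofAdd (-v))).inner_map_map, neg_apply_apply]

end IsometricRep

end IsometricRep

section Hilbert

variable {𝕜 ι E E' : Type*} [RCLike 𝕜]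
  [NormedAddCommGroup E] [InnerProductSpace 𝕜 E] [CompleteSpace E]
  [NormedAddCommGroup E'] [InnerProductSpace 𝕜 E'] [CompleteSpace E']

lemma dense_span_range_iff_forall_inner_eq_zero {a : ι → E} :
    Dense (Submodule.span 𝕜 (range a) : Set E) ↔ ∀ y, (∀ i, inner 𝕜 (a i) y = 0) → y = 0 := by
  simp only [Submodule.dense_iff_topologicalClosure_eq_top,
    Submodule.topologicalClosure_eq_top_iff, Submodule.eq_bot_iff]
  refine forall_congr' fun y => imp_congr_left ?_
  rw [← Submodule.span_singleton_le_iff_mem, ← Submodule.isOrtho_iff_le,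
    Submodule.isOrtho_comm, Submodule.isOrtho_span]
  simp

lemma exists_linearIsometryEquiv_of_inner_eq {a : ι → E} {b : ι → E'}
    (ha : Dense (Submodule.span 𝕜 (range a) : Set E))
    (hb : Dense (Submodule.span 𝕜 (range b) : Set E'))
    (hab : ∀ i j, inner 𝕜 (a i) (a j) = inner 𝕜 (b i) (b j)) :
    ∃ W : E ≃ₗᵢ[𝕜] E', ∀ i, W (a i) = b i := by
  rw [← Finsupp.range_linearCombination] at ha hb
  have norm_eq (x : ι →₀ 𝕜) :
      ‖Finsupp.linearCombination 𝕜 b (LinearEquiv.refl 𝕜 _ x)‖ =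
        ‖Finsupp.linearCombination 𝕜 a x‖ := by
    simp only [LinearEquiv.refl_apply, @norm_eq_sqrt_re_inner 𝕜, Finsupp.linearCombination_apply,
      Finsupp.sum, sum_inner, inner_sum, inner_smul_left, inner_smul_right, hab]
  refine ⟨(LinearEquiv.refl 𝕜 (ι →₀ 𝕜)).extendOfIsometry _ _ ha hb norm_eq, fun i => ?_⟩
  simpa using (LinearEquiv.refl 𝕜 (ι →₀ 𝕜)).extendOfIsometry_eq _ _ ha hb norm_eq
    (Finsupp.single i 1)

lemma exists_linearIsometryEquiv_of_range_eq {R G H H' : Type*} [Ring R]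
    [SeminormedAddCommGroup G] [Module R G] [NormedAddCommGroup H] [Module R H]
    [NormedAddCommGroup H'] [Module R H'] {i : H →ₗᵢ[R] G} {j : H' →ₗᵢ[R] G}
    (h : i.range = j.range) : ∃ Z : H ≃ₗᵢ[R] H', ∀ x, j (Z x) = i x := by
  refine ⟨(i.equivRange.trans (.ofEq _ _ h)).trans j.equivRange.symm, fun x => ?_⟩
  exact congrArg Subtype.val (j.equivRange.apply_symm_apply _)

end Hilbert

section Dilation

variable {𝕜 Γ M E E' : Type*} [RCLike 𝕜]
  [AddCommGroup Γ] [Preorder Γ]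
  [NormedAddCommGroup M] [InnerProductSpace 𝕜 M]
  [NormedAddCommGroup E] [InnerProductSpace 𝕜 E]
  [NormedAddCommGroup E'] [InnerProductSpace 𝕜 E']

/-- `(U, k)` is a dilation of the family `S`, indexed by the positive cone of `Γ`: under the
isometric embedding `k`, the operators `U v` with `0 ≤ v` extend the operators `S v`. -/
def IsDilation (U : IsometricRep 𝕜 Γ E) (k : M →ₗᵢ[𝕜] E) (S : Γ → M → M) : Prop :=
  ∀ v, 0 ≤ v → ∀ f, U (ofAdd v) (k f) = k (S v f)

namespace IsDilation

variable {S : Γ → M → M} {U : IsometricRep 𝕜 Γ E} {k : M →ₗᵢ[𝕜] E}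
  {U' : IsometricRep 𝕜 Γ E'} {k' : M →ₗᵢ[𝕜] E'}

-- Translating by a large `c` moves `v` and `w` into the positive cone, where `S` determines `U`.
lemma inner_apply_apply (h : IsDilation U k S) {c v w : Γ} (hv : 0 ≤ c + v) (hw : 0 ≤ c + w)
    (f g : M) :
    inner 𝕜 (U (ofAdd v) (k f)) (U (ofAdd w) (k g)) = inner 𝕜 (S (c + v) f) (S (c + w) g) := by
  rw [← k.inner_map_map, ← h _ hv, ← h _ hw, U.add_apply, U.add_apply,
    (U (ofAdd c)).inner_map_map]

theorem exists_linearIsometryEquiv [IsOrderedAddMonoid Γ] [IsDirectedOrder Γ]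
    [CompleteSpace E] [CompleteSpace E']
    (h : IsDilation U k S) (h' : IsDilation U' k' S)
    (hd : Dense (Submodule.span 𝕜 (range fun i : Γ × M => U (ofAdd i.1) (k i.2)) : Set E))
    (hd' : Dense (Submodule.span 𝕜 (range fun i : Γ × M => U' (ofAdd i.1) (k' i.2)) : Set E')) :
    ∃ W : E ≃ₗᵢ[𝕜] E', (∀ f, W (k f) = k' f) ∧
      ∀ v x, W (U (ofAdd v) x) = U' (ofAdd v) (W x) := by
  obtain ⟨W, hW⟩ := exists_linearIsometryEquiv_of_inner_eq hd hd' fun i j => by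
    obtain ⟨c, hi, hj⟩ := exists_ge_ge (-i.1) (-j.1)
    rw [neg_le_iff_add_nonneg] at hi hj
    rw [h.inner_apply_apply hi hj, h'.inner_apply_apply hi hj]
  refine ⟨W, fun f => ?_, fun v => ?_⟩
  · simpa only [IsometricRep.zero_apply] using hW (0, f)
  · have eqOn : EqOn ((W : E →L[𝕜] E') ∘L (U (ofAdd v)).toContinuousLinearMap)
        ((U' (ofAdd v)).toContinuousLinearMap ∘L (W : E →L[𝕜] E'))
        (range fun i : Γ × M => U (ofAdd i.1) (k i.2)) := by
      rintro _ ⟨⟨w, f⟩, rfl⟩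
      change W (U (ofAdd v) (U (ofAdd w) (k f))) = U' (ofAdd v) (W (U (ofAdd w) (k f)))
      rw [hW (w, f), ← U.add_apply, ← U'.add_apply, hW (v + w, f)]
    exact fun x => DFunLike.congr_fun (ContinuousLinearMap.ext_on hd eqOn) x

end IsDilation

end Dilation

section ExtendByZero

variable {α 𝕜 F : Type*} [MeasurableSpace α] [NormedAddCommGroup F] {p : ℝ≥0∞} {μ : Measure α}
  {s : Set α}

lemma memLp_indicator_coeFn (hs : MeasurableSet s) (f : Lp F p (μ.restrict s)) :
    MemLp (s.indicator f) p μ :=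
  (memLp_indicator_iff_restrict hs).2 (Lp.memLp f)

variable (𝕜) in
/-- Extension by zero of `Lp` functions on a measurable set `s` to the whole space. -/
def extendByZero [Fact (1 ≤ p)] [NormedRing 𝕜] [Module 𝕜 F] [IsBoundedSMul 𝕜 F]
    (hs : MeasurableSet s) : Lp F p (μ.restrict s) →ₗᵢ[𝕜] Lp F p μ where
  toFun f := (memLp_indicator_coeFn hs f).toLp _
  map_add' f g := by
    rw [← MemLp.toLp_add, MemLp.toLp_eq_toLp_iff, ← indicator_add',
      ← ae_eq_restrict_iff_indicator_ae_eq hs]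
    exact Lp.coeFn_add f g
  map_smul' c f := by
    rw [RingHom.id_apply, ← MemLp.toLp_const_smul, MemLp.toLp_eq_toLp_iff]
    exact ((ae_eq_restrict_iff_indicator_ae_eq hs).1 (Lp.coeFn_smul c f)).trans
      (.of_eq (indicator_const_smul s c f))
  norm_map' f := by
    change ‖(memLp_indicator_coeFn hs f).toLp _‖ = ‖f‖
    rw [Lp.norm_toLp, eLpNorm_indicator_eq_eLpNorm_restrict hs, Lp.norm_def]

section NormedRing

variable [Fact (1 ≤ p)] [NormedRing 𝕜] [Module 𝕜 F] [IsBoundedSMul 𝕜 F]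

lemma coeFn_extendByZero (hs : MeasurableSet s) (f : Lp F p (μ.restrict s)) :
    extendByZero 𝕜 hs f =ᵐ[μ] s.indicator f :=
  MemLp.coeFn_toLp (memLp_indicator_coeFn hs f)

lemma extendByZero_restrict (hs : MeasurableSet s) {f : Lp F p μ}
    (hf : f =ᵐ[μ.restrict sᶜ] 0) :
    extendByZero 𝕜 hs (LpToLpRestrictCLM α F 𝕜 μ p s f) = f := by
  refine Lp.ext ((coeFn_extendByZero hs _).trans ?_)
  filter_upwards [(ae_restrict_iff' hs).1 (LpToLpRestrictCLM_coeFn 𝕜 s f),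
    (ae_restrict_iff' hs.compl).1 hf] with x hx hx'
  by_cases h : x ∈ s
  · rw [indicator_of_mem h, hx h]
  · rw [indicator_of_notMem h, hx' h, Pi.zero_apply]

lemma mem_range_extendByZero (hs : MeasurableSet s) {f : Lp F p μ} :
    f ∈ (extendByZero 𝕜 hs : Lp F p (μ.restrict s) →ₗᵢ[𝕜] Lp F p μ).range ↔
      f =ᵐ[μ.restrict sᶜ] 0 := by
  refine ⟨?_, fun hf => ⟨_, extendByZero_restrict hs hf⟩⟩
  rintro ⟨g, rfl⟩
  exact EventuallyEq.trans (ae_restrict_of_ae (coeFn_extendByZero hs g))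
    (indicator_ae_eq_restrict_compl hs)

lemma restrict_extendByZero (hs : MeasurableSet s) (f : Lp F p (μ.restrict s)) :
    LpToLpRestrictCLM α F 𝕜 μ p s (extendByZero 𝕜 hs f) = f :=
  Lp.ext <| (LpToLpRestrictCLM_coeFn 𝕜 s _).trans <|
    EventuallyEq.trans (ae_restrict_of_ae (coeFn_extendByZero hs f)) (indicator_ae_eq_restrict hs)

end NormedRing

section InnerProduct

variable [RCLike 𝕜] [InnerProductSpace 𝕜 F]

lemma inner_extendByZero_left (hs : MeasurableSet s) (f : Lp F 2 (μ.restrict s)) (g : Lp F 2 μ) :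
    inner 𝕜 (extendByZero 𝕜 hs f) g = inner 𝕜 f (LpToLpRestrictCLM α F 𝕜 μ 2 s g) := by
  rw [L2.inner_def, L2.inner_def, ← integral_indicator hs]
  refine integral_congr_ae ?_
  filter_upwards [(ae_restrict_iff' hs).1 (LpToLpRestrictCLM_coeFn 𝕜 s g),
    coeFn_extendByZero (𝕜 := 𝕜) hs f] with x hg hf
  by_cases hx : x ∈ s
  · rw [hf, indicator_of_mem hx, indicator_of_mem hx, hg hx]
  · rw [hf, indicator_of_notMem hx, indicator_of_notMem hx, inner_zero_left]

lemma mem_orthogonal_range_extendByZero (hs : MeasurableSet s) {g : Lp F 2 μ} :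
    g ∈ (extendByZero 𝕜 hs : Lp F 2 (μ.restrict s) →ₗᵢ[𝕜] Lp F 2 μ).rangeᗮ ↔
      g =ᵐ[μ.restrict s] 0 := by
  have restrict_eq_zero : LpToLpRestrictCLM α F 𝕜 μ 2 s g = 0 ↔ g =ᵐ[μ.restrict s] 0 := by
    have coeFn_restrict := LpToLpRestrictCLM_coeFn 𝕜 s g
    rw [Lp.eq_zero_iff_ae_eq_zero]
    exact ⟨coeFn_restrict.symm.trans, coeFn_restrict.trans⟩
  rw [← restrict_eq_zero, Submodule.mem_orthogonal]
  constructor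
  · intro h
    rw [← inner_self_eq_zero (𝕜 := 𝕜), ← inner_extendByZero_left hs]
    exact h _ ⟨_, rfl⟩
  · rintro h _ ⟨f, rfl⟩
    exact (inner_extendByZero_left hs f g).trans (by rw [h, inner_zero_right])

lemma orthogonal_range_extendByZero (hs : MeasurableSet s) :
    (extendByZero 𝕜 hs : Lp F 2 (μ.restrict s) →ₗᵢ[𝕜] Lp F 2 μ).rangeᗮ =
      (extendByZero 𝕜 hs.compl : Lp F 2 (μ.restrict sᶜ) →ₗᵢ[𝕜] Lp F 2 μ).range := by
  ext g
  rw [mem_orthogonal_range_extendByZero, mem_range_extendByZero, compl_compl]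

end InnerProduct

end ExtendByZero

section Translation

variable {Γ 𝕜 F : Type*} [AddCommGroup Γ] [MeasurableSpace Γ] [MeasurableAdd Γ]
  [NormedAddCommGroup F] {p : ℝ≥0∞} [Fact (1 ≤ p)] {μ : Measure Γ} [μ.IsAddRightInvariant]
  {s : Set Γ}

lemma ae_sub_right {P : Γ → Prop} (h : ∀ᵐ x ∂μ, P x) (v : Γ) : ∀ᵐ x ∂μ, P (x - v) :=
  (measurePreserving_sub_right μ v).quasiMeasurePreserving.ae h

section NormedRing

variable [NormedRing 𝕜] [Module 𝕜 F] [IsBoundedSMul 𝕜 F]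

variable (𝕜 F p μ) in
/-- The translation representation on `Lp`, `f ↦ f (· - v)`. -/
def translation : IsometricRep 𝕜 Γ (Lp F p μ) where
  toFun v := Lp.compMeasurePreservingₗᵢ 𝕜 _ (measurePreserving_sub_right μ v.toAdd)
  map_one' := by
    ext1 f
    refine Lp.ext ((Lp.coeFn_compMeasurePreserving f _).trans (.of_eq ?_))
    simp [Function.comp_def]
  map_mul' v w := by
    ext1 f
    refine Lp.ext ((Lp.coeFn_compMeasurePreserving f _).trans ?_)
    filter_upwards [Lp.coeFn_compMeasurePreserving
        (Lp.compMeasurePreservingₗᵢ 𝕜 _ (measurePreserving_sub_right μ w.toAdd) f)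
        (measurePreserving_sub_right μ v.toAdd),
      ae_sub_right (Lp.coeFn_compMeasurePreserving f (measurePreserving_sub_right μ w.toAdd))
        v.toAdd] with x hv hw
    refine Eq.trans ?_ (hv.trans hw).symm
    rw [Function.comp_apply, Function.comp_apply, toAdd_mul, sub_add_eq_sub_sub]

lemma coeFn_translation (v : Γ) (f : Lp F p μ) :
    translation 𝕜 F p μ (ofAdd v) f =ᵐ[μ] fun x => f (x - v) :=
  Lp.coeFn_compMeasurePreserving f _

lemma coeFn_translation_extendByZero (hs : MeasurableSet s) (v : Γ) (f : Lp F p (μ.restrict s)) :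
    translation 𝕜 F p μ (ofAdd v) (extendByZero 𝕜 hs f) =ᵐ[μ] fun x => s.indicator f (x - v) :=
  (coeFn_translation v _).trans (ae_sub_right (coeFn_extendByZero hs f) v)

variable (𝕜) in
/-- The compression of the translation by `v` to `Lp` functions on `s`. For an upper set `s` and
`0 ≤ v` it is the shift semigroup, extended by zero on `s \ (v +ᵥ s)`; for a lower set and `v ≤ 0`
likewise. -/
def shift (hs : MeasurableSet s) (v : Γ) (f : Lp F p (μ.restrict s)) : Lp F p (μ.restrict s) :=
  LpToLpRestrictCLM Γ F 𝕜 μ p s (translation 𝕜 F p μ (ofAdd v) (extendByZero 𝕜 hs f))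

lemma coeFn_shift (hs : MeasurableSet s) (v : Γ) (f : Lp F p (μ.restrict s)) :
    shift 𝕜 hs v f =ᵐ[μ.restrict s] fun x => s.indicator f (x - v) :=
  (LpToLpRestrictCLM_coeFn 𝕜 s _).trans
    (ae_restrict_of_ae (coeFn_translation_extendByZero hs v f))

variable [Preorder Γ] [IsOrderedAddMonoid Γ]

lemma extendByZero_shift (hs : MeasurableSet s) (hsu : IsUpperSet s) {v : Γ} (hv : 0 ≤ v)
    (f : Lp F p (μ.restrict s)) :
    extendByZero 𝕜 hs (shift 𝕜 hs v f) =
      translation 𝕜 F p μ (ofAdd v) (extendByZero 𝕜 hs f) := by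
  refine extendByZero_restrict hs ((ae_restrict_iff' hs.compl).2 ?_)
  filter_upwards [coeFn_translation_extendByZero (𝕜 := 𝕜) hs v f] with x hx hxs
  rw [hx, indicator_of_notMem fun h => hxs (hsu (sub_le_self x hv) h), Pi.zero_apply]

lemma shift_shift (hs : MeasurableSet s) (hsu : IsUpperSet s) {v w : Γ} (hv : 0 ≤ v)
    (hw : 0 ≤ w) (f : Lp F p (μ.restrict s)) :
    shift 𝕜 hs v (shift 𝕜 hs w f) = shift 𝕜 hs (v + w) f := by
  apply (extendByZero 𝕜 hs).injective
  rw [extendByZero_shift hs hsu hv, extendByZero_shift hs hsu hw,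
    extendByZero_shift hs hsu (add_nonneg hv hw), IsometricRep.add_apply]

end NormedRing

section InnerProduct

variable [RCLike 𝕜] [InnerProductSpace 𝕜 F] [Preorder Γ] [IsOrderedAddMonoid Γ]

lemma isDilation_translation (hs : MeasurableSet s) (hsu : IsUpperSet s) :
    IsDilation (translation 𝕜 F 2 μ) (extendByZero 𝕜 hs) (shift 𝕜 hs) :=
  fun _ hv f => (extendByZero_shift hs hsu hv f).symm

lemma dense_span_translation_extendByZero [CompleteSpace F] [IsDirectedOrder Γ]
    [(atTop : Filter Γ).IsCountablyGenerated] (hs : MeasurableSet s) (hsu : IsUpperSet s)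
    (hsn : s.Nonempty) :
    Dense (Submodule.span 𝕜 (range fun i : Γ × Lp F 2 (μ.restrict s) =>
      translation 𝕜 F 2 μ (ofAdd i.1) (extendByZero 𝕜 hs i.2)) : Set (Lp F 2 μ)) := by
  refine dense_span_range_iff_forall_inner_eq_zero.2 fun y hy => ?_
  have translate_eq_zero (v : Γ) : translation 𝕜 F 2 μ (ofAdd (-v)) y =ᵐ[μ.restrict s] 0 := by
    refine (mem_orthogonal_range_extendByZero (𝕜 := 𝕜) hs).1 ?_
    rintro _ ⟨f, rfl⟩
    exact ((translation 𝕜 F 2 μ).inner_apply_left v _ y).symm.trans (hy (v, f))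
  have eq_zero_of_sub_mem (v : Γ) : ∀ᵐ x ∂μ, x - v ∈ s → y x = 0 := by
    filter_upwards [ae_sub_right ((ae_restrict_iff' hs).1 (translate_eq_zero v)) v,
      ae_sub_right (coeFn_translation (𝕜 := 𝕜) (-v) y) v] with x hx hx' hxs
    rw [← sub_add_cancel x v, ← sub_neg_eq_add, ← hx', hx hxs, Pi.zero_apply]
  obtain ⟨q, hq⟩ := hsn
  obtain ⟨w, hw⟩ := exists_seq_tendsto (atTop : Filter Γ)
  refine Lp.eq_zero_iff_ae_eq_zero.2 ?_
  filter_upwards [ae_all_iff.2 fun n => eq_zero_of_sub_mem (-w n)] with x hx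
  obtain ⟨n, hn⟩ := (hw.eventually_ge_atTop (q - x)).exists
  exact hx n (hsu (by rwa [sub_neg_eq_add, ← sub_le_iff_le_add']) hq)

end InnerProduct

end Translation

section UnitaryPart

variable {𝕜 Γ E H : Type*} [RCLike 𝕜] [AddCommGroup Γ]
  [NormedAddCommGroup E] [InnerProductSpace 𝕜 E] [NormedAddCommGroup H] [InnerProductSpace 𝕜 H]

/-- The largest subspace of `H` whose image under `J` is invariant under the group `U`. If `U`
dilates a semigroup on `H` along `J`, it is the unitary part of that semigroup. -/
def unitaryPart (U : IsometricRep 𝕜 Γ E) (J : H →ₗᵢ[𝕜] E) : Submodule 𝕜 H :=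
  ⨅ v, J.range.comap ((U (ofAdd v)).comp J).toLinearMap

variable {U : IsometricRep 𝕜 Γ E} {J : H →ₗᵢ[𝕜] E}

lemma mem_unitaryPart {x : H} : x ∈ unitaryPart U J ↔ ∀ v, U (ofAdd v) (J x) ∈ J.range := by
  simp only [unitaryPart, Submodule.mem_iInf]
  rfl

lemma isClosed_unitaryPart [CompleteSpace H] : IsClosed (unitaryPart U J : Set H) := by
  rw [unitaryPart, Submodule.coe_iInf]
  exact isClosed_iInter fun v => J.isometry.isClosedEmbedding.isClosed_range.preimage
    ((U (ofAdd v)).comp J).continuous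

lemma exists_mem_unitaryPart (v : Γ) {x : H} (hx : x ∈ unitaryPart U J) :
    ∃ y ∈ unitaryPart U J, J y = U (ofAdd v) (J x) := by
  obtain ⟨y, hy⟩ := mem_unitaryPart.1 hx v
  refine ⟨y, mem_unitaryPart.2 fun w => ?_, hy⟩
  rw [show J y = U (ofAdd v) (J x) from hy, ← U.add_apply]
  exact mem_unitaryPart.1 hx (w + v)

lemma dense_span_of_unitaryPart_eq_bot {M : Type*} [NormedAddCommGroup M] [InnerProductSpace 𝕜 M]
    [CompleteSpace E] {k : M →ₗᵢ[𝕜] E} (hJk : J.range = k.rangeᗮ) (hJ : unitaryPart U J = ⊥) :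
    Dense (Submodule.span 𝕜 (range fun i : Γ × M => U (ofAdd i.1) (k i.2)) : Set E) := by
  refine dense_span_range_iff_forall_inner_eq_zero.2 fun y hy => ?_
  have apply_mem_range (v : Γ) : U (ofAdd v) y ∈ J.range := by
    rw [hJk]
    rintro _ ⟨f, rfl⟩
    have := U.inner_apply_left (-v) (k f) y
    rw [neg_neg] at this
    exact this.symm.trans (hy (-v, f))
  obtain ⟨x, rfl⟩ : y ∈ J.range := U.zero_apply y ▸ apply_mem_range 0
  have mem : x ∈ unitaryPart U J := mem_unitaryPart.2 apply_mem_range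
  rw [hJ, Submodule.mem_bot] at mem
  rw [mem, map_zero]

end UnitaryPart

theorem exists_linearIsometryEquiv_Lp_compl {𝕜 Γ F E H : Type*} [RCLike 𝕜]
    [AddCommGroup Γ] [Preorder Γ] [IsOrderedAddMonoid Γ] [IsDirectedOrder Γ]
    [(atTop : Filter Γ).IsCountablyGenerated] [MeasurableSpace Γ] [MeasurableAdd Γ]
    {μ : Measure Γ} [μ.IsAddRightInvariant] {s : Set Γ}
    [NormedAddCommGroup F] [InnerProductSpace 𝕜 F] [CompleteSpace F]
    [NormedAddCommGroup E] [InnerProductSpace 𝕜 E] [CompleteSpace E]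
    [NormedAddCommGroup H] [InnerProductSpace 𝕜 H]
    (hs : MeasurableSet s) (hsu : IsUpperSet s) (hsn : s.Nonempty)
    {U : IsometricRep 𝕜 Γ E} {k : Lp F 2 (μ.restrict s) →ₗᵢ[𝕜] E} {J : H →ₗᵢ[𝕜] E}
    (hk : IsDilation U k (shift 𝕜 hs)) (hJk : J.range = k.rangeᗮ) (hJ : unitaryPart U J = ⊥) :
    ∃ Z : H ≃ₗᵢ[𝕜] Lp F 2 (μ.restrict sᶜ), ∀ v x y, U (ofAdd v) (J x) = J y →
      Z y = shift 𝕜 hs.compl v (Z x) := by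
  obtain ⟨W, hWk, hWU⟩ := hk.exists_linearIsometryEquiv (isDilation_translation hs hsu)
    (dense_span_of_unitaryPart_eq_bot hJk hJ) (dense_span_translation_extendByZero hs hsu hsn)
  have range_eq : (W.toLinearIsometry.comp J).range =
      (extendByZero 𝕜 hs.compl : Lp F 2 (μ.restrict sᶜ) →ₗᵢ[𝕜] Lp F 2 μ).range := by
    have hWk : W.toLinearIsometry.comp k = extendByZero 𝕜 hs := LinearIsometry.ext hWk
    calc (W.toLinearIsometry.comp J).range
        = J.range.map W.toLinearEquiv.toLinearMap := LinearMap.range_comp _ _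
      _ = (k.range.map W.toLinearEquiv.toLinearMap)ᗮ := by
        rw [hJk, Submodule.map_orthogonal_equiv]
      _ = (W.toLinearIsometry.comp k).rangeᗮ := congrArg _ (LinearMap.range_comp _ _).symm
      _ = _ := by rw [hWk, orthogonal_range_extendByZero]
  obtain ⟨Z, hZ⟩ := exists_linearIsometryEquiv_of_range_eq range_eq
  refine ⟨Z, fun v x y hxy => ?_⟩
  have extend_eq : extendByZero 𝕜 hs.compl (Z y) =
      translation 𝕜 F 2 μ (ofAdd v) (extendByZero 𝕜 hs.compl (Z x)) := by
    rw [hZ, hZ]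
    exact (congrArg W hxy.symm).trans (hWU v (J x))
  rw [shift, ← extend_eq, restrict_extendByZero]

section Cnu

variable {G : Type} [NormedAddCommGroup G] [InnerProductSpace ℂ G]
  {Γ E : Type*} [AddCommGroup Γ] [NormedAddCommGroup E] [InnerProductSpace ℂ E]
  {U : IsometricRep ℂ Γ E} {J : G →ₗᵢ[ℂ] E} {V : ℝ≥0 → G →L[ℂ] G} {e : ℝ≥0 → Γ}

lemma isUnitarySemigroupOn_unitaryPart (hV : ∀ t x, U (ofAdd (e t)) (J x) = J (V t x)) :
    IsUnitarySemigroupOn V (unitaryPart U J) := by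
  refine fun t => ⟨fun x hx => ?_, fun x _ => ?_, fun y hy => ?_⟩
  · obtain ⟨y, hy, hyx⟩ := exists_mem_unitaryPart (e t) hx
    rwa [← J.injective (hyx.trans (hV t x))]
  · rw [← J.norm_map, ← hV, LinearIsometry.norm_map, LinearIsometry.norm_map]
  · obtain ⟨x, hx, hxy⟩ := exists_mem_unitaryPart (-e t) hy
    exact ⟨x, hx, J.injective (by rw [← hV, hxy, U.apply_neg_apply])⟩

variable [CompleteSpace G]

lemma adjoint_apply_mem_of_restrictsToUnitaryOn {T : G →L[ℂ] G} {L : Submodule ℂ G}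
    (hT : ∀ x, ‖T x‖ = ‖x‖) (h : RestrictsToUnitaryOn T L) {y : G} (hy : y ∈ L) :
    adjoint T y ∈ L := by
  obtain ⟨x, hx, rfl⟩ := h.2.2 y hy
  rwa [← comp_apply, (norm_map_iff_adjoint_comp_self T).1 hT]

lemma reducedBy_unitaryPart (hV : ∀ t x, U (ofAdd (e t)) (J x) = J (V t x)) :
    ReducedBy V (unitaryPart U J) := by
  have unitaryOn := isUnitarySemigroupOn_unitaryPart hV
  have norm_eq (t : ℝ≥0) (x : G) : ‖V t x‖ = ‖x‖ := by
    rw [← J.norm_map, ← hV, LinearIsometry.norm_map, LinearIsometry.norm_map]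
  exact ⟨fun t => (unitaryOn t).1, fun t _ hx =>
    adjoint_apply_mem_of_restrictsToUnitaryOn (norm_eq t) (unitaryOn t) hx⟩

lemma unitaryPart_eq_bot_of_isCnuPair {V1 V2 : ℝ≥0 → G →L[ℂ] G} {e1 e2 : ℝ≥0 → Γ}
    (h : IsCnuPair V1 V2) (hV1 : ∀ t x, U (ofAdd (e1 t)) (J x) = J (V1 t x))
    (hV2 : ∀ t x, U (ofAdd (e2 t)) (J x) = J (V2 t x)) : unitaryPart U J = ⊥ :=
  h _ isClosed_unitaryPart (reducedBy_unitaryPart hV1) (reducedBy_unitaryPart hV2)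
    (isUnitarySemigroupOn_unitaryPart hV1) (isUnitarySemigroupOn_unitaryPart hV2)

end Cnu

section DualRep

variable {E : Type} [NormedAddCommGroup E] [InnerProductSpace ℂ E]
  {U U1 U2 : ℝ → E →L[ℂ] E}

lemma IsUnitaryGroup.zero_apply (h : IsUnitaryGroup U) (x : E) : U 0 x = x := by
  rw [h.1, one_def, id_apply]

lemma IsUnitaryGroup.adjoint_eq [CompleteSpace E] (h : IsUnitaryGroup U) (t : ℝ) :
    adjoint (U t) = U (-t) := by
  obtain ⟨zero, add, norm_eq, -⟩ := h
  calc adjoint (U t) = adjoint (U t) ∘L U t ∘L U (-t) := by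
        rw [← add, add_neg_cancel, zero, one_def, comp_id]
    _ = U (-t) := by
        rw [← comp_assoc, (norm_map_iff_adjoint_comp_self (U t)).1 (norm_eq t), one_def, id_comp]

/-- The representation `(s, t) ↦ U₁(s)* U₂(t)*` of `ℝ²` determined by two commuting unitary
groups. Taking adjoints makes it dilate the dual pair rather than the pair itself. -/
def dualRep (h1 : IsUnitaryGroup U1) (h2 : IsUnitaryGroup U2)
    (hc : ∀ s t, U1 s ∘L U2 t = U2 t ∘L U1 s) : IsometricRep ℂ (ℝ × ℝ) E where
  toFun v :=
    { toLinearMap := (U1 (-v.toAdd.1) ∘L U2 (-v.toAdd.2)).toLinearMap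
      norm_map' := fun x => (h1.2.2.1 _ _).trans (h2.2.2.1 _ _) }
  map_one' := by
    ext x
    change U1 (-0) (U2 (-0) x) = x
    rw [neg_zero, h1.zero_apply, h2.zero_apply]
  map_mul' v w := by
    ext x
    change U1 (-(v.toAdd.1 + w.toAdd.1)) (U2 (-(v.toAdd.2 + w.toAdd.2)) x) =
      U1 (-v.toAdd.1) (U2 (-v.toAdd.2) (U1 (-w.toAdd.1) (U2 (-w.toAdd.2) x)))
    rw [neg_add, neg_add, h1.2.1, h2.2.1, comp_apply, comp_apply, ← comp_apply (U1 _) (U2 _), hc,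
      comp_apply]

variable (h1 : IsUnitaryGroup U1) (h2 : IsUnitaryGroup U2)
  (hc : ∀ s t, U1 s ∘L U2 t = U2 t ∘L U1 s)

lemma dualRep_fst (t : ℝ) (x : E) : dualRep h1 h2 hc (ofAdd (t, 0)) x = U1 (-t) x := by
  change U1 (-t) (U2 (-0) x) = U1 (-t) x
  rw [neg_zero, h2.zero_apply]

lemma dualRep_snd (t : ℝ) (x : E) : dualRep h1 h2 hc (ofAdd (0, t)) x = U2 (-t) x := by
  change U1 (-0) (U2 (-t) x) = U2 (-t) x
  rw [neg_zero, h1.zero_apply]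

end DualRep

section Quadrant

lemma QQ_eq_Ici : QQ = Ici 0 := rfl

lemma measurableSet_QQ : MeasurableSet QQ := QQ_eq_Ici ▸ measurableSet_Ici

lemma isUpperSet_QQ : IsUpperSet QQ := QQ_eq_Ici ▸ isUpperSet_Ici 0

lemma nonempty_QQ : QQ.Nonempty := QQ_eq_Ici ▸ nonempty_Ici

variable {F : Type*} [NormedAddCommGroup F] [InnerProductSpace ℂ F]

lemma coeFn_shift_QQ_fst (t : ℝ) (f : Lp F 2 (volume.restrict QQ)) :
    shift ℂ measurableSet_QQ (t, (0 : ℝ)) f =ᵐ[volume.restrict QQ]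
      fun p => if t ≤ p.1 then f (p.1 - t, p.2) else 0 := by
  filter_upwards [coeFn_shift (𝕜 := ℂ) measurableSet_QQ (t, (0 : ℝ)) f,
    ae_restrict_mem measurableSet_QQ] with p hp hpQ
  have sub_eq : p - (t, 0) = (p.1 - t, p.2) := by ext <;> simp
  classical
  rw [hp, sub_eq, indicator_apply]
  exact if_congr (by simp [QQ, hpQ.2]) rfl rfl

lemma coeFn_shift_QQ_snd (t : ℝ) (f : Lp F 2 (volume.restrict QQ)) :
    shift ℂ measurableSet_QQ ((0 : ℝ), t) f =ᵐ[volume.restrict QQ]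
      fun p => if t ≤ p.2 then f (p.1, p.2 - t) else 0 := by
  filter_upwards [coeFn_shift (𝕜 := ℂ) measurableSet_QQ ((0 : ℝ), t) f,
    ae_restrict_mem measurableSet_QQ] with p hp hpQ
  have sub_eq : p - (0, t) = (p.1, p.2 - t) := by ext <;> simp
  classical
  rw [hp, sub_eq, indicator_apply]
  exact if_congr (by simp [QQ, hpQ.1]) rfl rfl

lemma coeFn_shift_compl_QQ_fst (t : ℝ) (f : Lp F 2 (volume.restrict QQᶜ)) :
    shift ℂ measurableSet_QQ.compl (-t, (0 : ℝ)) f =ᵐ[volume.restrict QQᶜ]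
      fun p => if 0 ≤ p.2 ∧ -t ≤ p.1 then 0 else f (p.1 + t, p.2) := by
  filter_upwards [coeFn_shift (𝕜 := ℂ) measurableSet_QQ.compl (-t, (0 : ℝ)) f] with p hp
  have sub_eq : p - (-t, 0) = (p.1 + t, p.2) := by ext <;> simp
  classical
  simp only [hp, sub_eq, indicator_apply, mem_compl_iff, ite_not]
  exact if_congr (by simp [QQ, neg_le_iff_add_nonneg, and_comm]) rfl rfl

lemma coeFn_shift_compl_QQ_snd (t : ℝ) (f : Lp F 2 (volume.restrict QQᶜ)) :
    shift ℂ measurableSet_QQ.compl ((0 : ℝ), -t) f =ᵐ[volume.restrict QQᶜ]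
      fun p => if 0 ≤ p.1 ∧ -t ≤ p.2 then 0 else f (p.1, p.2 + t) := by
  filter_upwards [coeFn_shift (𝕜 := ℂ) measurableSet_QQ.compl ((0 : ℝ), -t) f] with p hp
  have sub_eq : p - (0, -t) = (p.1, p.2 + t) := by ext <;> simp
  classical
  simp only [hp, sub_eq, indicator_apply, mem_compl_iff, ite_not]
  exact if_congr (by simp [QQ, neg_le_iff_add_nonneg]) rfl rfl

end Quadrant

lemma exists_isDilation_dualRep {E : Type} [NormedAddCommGroup E] [InnerProductSpace ℂ E]
    [CompleteSpace E] {U1 U2 : ℝ → E →L[ℂ] E} {K : Submodule ℂ E} (h1 : IsUnitaryGroup U1)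
    (h2 : IsUnitaryGroup U2) (hc : ∀ s t, U1 s ∘L U2 t = U2 t ∘L U1 s)
    (hd : DualIsBishift K U1 U2) :
    ∃ (F : Type) (_ : NormedAddCommGroup F) (_ : InnerProductSpace ℂ F) (_ : CompleteSpace F)
      (k : Lp F 2 (volume.restrict QQ) →ₗᵢ[ℂ] E),
      k.range = Kᗮ ∧ IsDilation (dualRep h1 h2 hc) k (shift ℂ measurableSet_QQ) := by
  unfold DualIsBishift nuQ at hd
  obtain ⟨F, _, _, _, Z, hZ⟩ := hd
  refine ⟨F, _, _, ‹_›, Kᗮ.subtypeₗᵢ.comp Z.symm.toLinearIsometry,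
    (LinearMap.range_comp_of_range_eq_top _ Z.symm.toLinearEquiv.range).trans Kᗮ.range_subtype,
    fun v hv f => ?_⟩
  set k : Lp F 2 (volume.restrict QQ) →ₗᵢ[ℂ] E := Kᗮ.subtypeₗᵢ.comp Z.symm.toLinearIsometry
  have apply_fst (f : Lp F 2 (volume.restrict QQ)) : dualRep h1 h2 hc (ofAdd (v.1, 0)) (k f) =
      k (shift ℂ measurableSet_QQ (v.1, (0 : ℝ)) f) := by
    rw [dualRep_fst, ← h1.adjoint_eq]
    exact (hZ v.1 hv.1 f _).1 (coeFn_shift_QQ_fst v.1 f)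
  have apply_snd (f : Lp F 2 (volume.restrict QQ)) : dualRep h1 h2 hc (ofAdd (0, v.2)) (k f) =
      k (shift ℂ measurableSet_QQ ((0 : ℝ), v.2) f) := by
    rw [dualRep_snd, ← h2.adjoint_eq]
    exact (hZ v.2 hv.2 f _).2 (coeFn_shift_QQ_snd v.2 f)
  have fst_nonneg : (0 : ℝ × ℝ) ≤ (v.1, 0) := ⟨hv.1, le_rfl⟩
  have snd_nonneg : (0 : ℝ × ℝ) ≤ (0, v.2) := ⟨le_rfl, hv.2⟩
  have add_eq : (v.1, 0) + (0, v.2) = v := by simp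
  calc dualRep h1 h2 hc (ofAdd v) (k f)
      = dualRep h1 h2 hc (ofAdd (v.1, 0)) (dualRep h1 h2 hc (ofAdd (0, v.2)) (k f)) := by
        rw [← IsometricRep.add_apply, add_eq]
    _ = k (shift ℂ measurableSet_QQ (v.1, (0 : ℝ))
          (shift ℂ measurableSet_QQ ((0 : ℝ), v.2) f)) := by rw [apply_snd, apply_fst]
    _ = k (shift ℂ measurableSet_QQ v f) := by
        rw [shift_shift measurableSet_QQ isUpperSet_QQ fst_nonneg snd_nonneg, add_eq]

/-- Every modified-bishift-semigroup is jointly unitarily equivalent to the model pair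
`(M₁ ⊗ I_F, M₂ ⊗ I_F)` on `L²(ℝ² ∖ ℝ₊², F)` for some Hilbert space `F`. -/
theorem modified_bishift_model {H : Type} [NormedAddCommGroup H] [InnerProductSpace ℂ H]
    [CompleteSpace H] (V1 V2 : ℝ≥0 → H →L[ℂ] H) (hmb : IsModifiedBishift V1 V2) :
    ∃ (F : Type) (_ : NormedAddCommGroup F) (_ : InnerProductSpace ℂ F) (_ : CompleteSpace F)
      (Z : H ≃ₗᵢ[ℂ] Lp F 2 nuQc),
      ∀ (t : ℝ≥0) (x : H),
        ((Z (V1 t x) : ℝ × ℝ → F) =ᵐ[nuQc]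
          fun p => if 0 ≤ p.2 ∧ -(t : ℝ) ≤ p.1 then 0
            else (Z x : ℝ × ℝ → F) (p.1 + (t : ℝ), p.2)) ∧
        ((Z (V2 t x) : ℝ × ℝ → F) =ᵐ[nuQc]
          fun p => if 0 ≤ p.1 ∧ -(t : ℝ) ≤ p.2 then 0
            else (Z x : ℝ × ℝ → F) (p.1, p.2 + (t : ℝ))) := by
  unfold nuQc
  obtain ⟨-, -, -, hcnu, E, _, _, _, J, U1, U2, h1, h2, hc, hJ, -, hd⟩ := hmb
  obtain ⟨F, _, _, _, k, range_k, hk⟩ := exists_isDilation_dualRep h1 h2 hc hd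
  have range_J : J.range = k.rangeᗮ := by
    rw [range_k, Submodule.orthogonal_orthogonal_eq_closure]
    exact J.isometry.isClosedEmbedding.isClosed_range.submodule_topologicalClosure_eq.symm
  have hV1 (t : ℝ≥0) (x : H) :
      dualRep h1 h2 hc (ofAdd (-(t : ℝ), 0)) (J x) = J (V1 t x) := by
    rw [dualRep_fst, neg_neg, (hJ t x).1]
  have hV2 (t : ℝ≥0) (x : H) :
      dualRep h1 h2 hc (ofAdd (0, -(t : ℝ))) (J x) = J (V2 t x) := by
    rw [dualRep_snd, neg_neg, (hJ t x).2]
  obtain ⟨Z, hZ⟩ := exists_linearIsometryEquiv_Lp_compl measurableSet_QQ isUpperSet_QQ nonempty_QQ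
    hk range_J (unitaryPart_eq_bot_of_isCnuPair hcnu hV1 hV2)
  refine ⟨F, _, _, ‹_›, Z, fun t x => ⟨?_, ?_⟩⟩
  · rw [hZ _ _ _ (hV1 t x)]
    exact coeFn_shift_compl_QQ_fst t (Z x)
  · rw [hZ _ _ _ (hV2 t x)]
    exact coeFn_shift_compl_QQ_snd t (Z x)
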